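/- arXiv:2602.21431 — 3 statements merged into one kernel-verified Lean document; each statement's English description precedes it below -/
import Mathlib

section
/- Let k be a commutative ring, A an associative k-algebra, and B₁, B₂ : A × A → A two k-bilinear maps. Equip the k-module A × A × A with the multiplication (a₀,a₁,a₂)·(b₀,b₁,b₂) = (a₀b₀, a₀b₁ + a₁b₀ + B₁(a₀,b₀), a₀b₂ + a₁b₁ + a₂b₀ + B₁(a₀,b₁) + B₁(a₁,b₀) + B₂(a₀,b₀)). This multiplication is associative if and only if B₁ is a Hochschild 2-cocycle and, for all a, b, c ∈ A, a·B₂(b,c) − B₂(a·b, c) + B₂(a, b·c) − B₂(a,b)·c = B₁(B₁(a,b), c) − B₁(a, B₁(b,c)). -/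
/-- The multiplication on `A × A × A` modelling a second-order deformation of `A` over
`k[x]/(x³)`, with star product `a ∗ b = ab + x B₁(a,b) + x² B₂(a,b)`. -/
def deformMul₂ {k A : Type*} [CommRing k] [Ring A] [Algebra k A]
    (B₁ B₂ : A →ₗ[k] A →ₗ[k] A) (x y : A × A × A) : A × A × A :=
  (x.1 * y.1,
   x.1 * y.2.1 + x.2.1 * y.1 + B₁ x.1 y.1,
   x.1 * y.2.2 + x.2.1 * y.2.1 + x.2.2 * y.1 + B₁ x.1 y.2.1 + B₁ x.2.1 y.1 + B₂ x.1 y.1)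

/-- The multiplication
`(a₀,a₁,a₂)·(b₀,b₁,b₂) = (a₀b₀, a₀b₁ + a₁b₀ + B₁(a₀,b₀),
  a₀b₂ + a₁b₁ + a₂b₀ + B₁(a₀,b₁) + B₁(a₁,b₀) + B₂(a₀,b₀))`
on `A × A × A` is associative iff `B₁` is a Hochschild 2-cocycle and the Hochschild
coboundary of `B₂` equals the obstruction `B₁(B₁(a,b),c) − B₁(a,B₁(b,c))`. -/
theorem deformMul₂_assoc_iff
    {k A : Type*} [CommRing k] [Ring A] [Algebra k A]
    (B₁ B₂ : A →ₗ[k] A →ₗ[k] A) :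
    (∀ x y z : A × A × A,
        deformMul₂ B₁ B₂ (deformMul₂ B₁ B₂ x y) z =
          deformMul₂ B₁ B₂ x (deformMul₂ B₁ B₂ y z)) ↔
      ((∀ a b c : A, a * B₁ b c - B₁ (a * b) c + B₁ a (b * c) - B₁ a b * c = 0) ∧
        ∀ a b c : A,
          a * B₂ b c - B₂ (a * b) c + B₂ a (b * c) - B₂ a b * c =
            B₁ (B₁ a b) c - B₁ a (B₁ b c)) := by
  constructor
  · intro h
    refine ⟨fun a b c ↦ ?_, fun a b c ↦ ?_⟩
    · have key := congrArg (fun p ↦ p.2.1) (h (a, 0, 0) (b, 0, 0) (c, 0, 0))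
      simp only [deformMul₂, mul_zero, zero_mul, add_zero, zero_add] at key
      rw [← sub_eq_zero] at key
      rw [← neg_eq_zero, ← key]
      abel
    · have key := congrArg (fun p ↦ p.2.2) (h (a, 0, 0) (b, 0, 0) (c, 0, 0))
      simp only [deformMul₂, mul_zero, zero_mul, add_zero, zero_add, map_zero,
        LinearMap.zero_apply] at key
      rw [← sub_eq_zero] at key
      rw [← sub_eq_zero, ← neg_eq_zero, ← key]
      abel
  · rintro ⟨h₁, h₂⟩ ⟨a₀, a₁, a₂⟩ ⟨b₀, b₁, b₂⟩ ⟨c₀, c₁, c₂⟩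
    simp only [deformMul₂, Prod.mk.injEq, map_add, LinearMap.add_apply, mul_add, add_mul,
      mul_assoc, true_and]
    constructor
    · rw [← sub_eq_zero, ← neg_eq_zero, ← h₁ a₀ b₀ c₀]
      abel
    · have key := congrArg₂ (· + ·) (congrArg₂ (· + ·) (h₁ a₀ b₀ c₁) (h₁ a₀ b₁ c₀))
        (congrArg₂ (· + ·) (h₁ a₁ b₀ c₀) (sub_eq_zero.mpr (h₂ a₀ b₀ c₀)))
      simp only [add_zero] at key
      rw [← sub_eq_zero, ← neg_eq_zero, ← key]
      abel
end

section
/- Let k be a commutative ring and A an associative k-algebra. Assume that every Hochschild 3-cocycle on A is a coboundary, i.e. for every k-trilinear T : A × A × A → A satisfying a·T(b,c,d) − T(a·b,c,d) + T(a,b·c,d) − T(a,b,c·d) + T(a,b,c)·d = 0 there exists a k-bilinear S : A × A → A with T(a,b,c) = a·S(b,c) − S(a·b,c) + S(a,b·c) − S(a,b)·c for all a,b,c. Then every Hochschild 2-cocycle B₁ on A extends to a second-order deformation: there exists a k-bilinear map B₂ : A × A → A such that a·B₂(b,c) − B₂(a·b, c) + B₂(a, b·c) − B₂(a,b)·c =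 B₁(B₁(a,b), c) − B₁(a, B₁(b,c)) for all a, b, c ∈ A. -/
/-- The associator of a bilinear map, `(a, b, c) ↦ B (B a b) c - B a (B b c)`, as a trilinear
map. -/
def LinearMap.bilinAssociator {k M : Type*} [CommRing k] [AddCommGroup M] [Module k M]
    (B : M →ₗ[k] M →ₗ[k] M) : M →ₗ[k] M →ₗ[k] M →ₗ[k] M :=
  B.compr₂ B - LinearMap.lcomp k (M →ₗ[k] M) B ∘ₗ LinearMap.llcomp k M M M ∘ₗ B

@[simp]
theorem LinearMap.bilinAssociator_apply {k M : Type*} [CommRing k] [AddCommGroup M] [Module k M]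
    (B : M →ₗ[k] M →ₗ[k] M) (a b c : M) :
    B.bilinAssociator a b c = B (B a b) c - B a (B b c) :=
  rfl

/-- The associator of a Hochschild 2-cocycle is a Hochschild 3-cocycle. -/
theorem LinearMap.bilinAssociator_threeCocycle {k A : Type*} [CommRing k] [Ring A] [Algebra k A]
    (B : A →ₗ[k] A →ₗ[k] A)
    (hB : ∀ a b c : A, a * B b c - B (a * b) c + B a (b * c) - B a b * c = 0) (a b c d : A) :
    a * B.bilinAssociator b c d - B.bilinAssociator (a * b) c d + B.bilinAssociator a (b * c) d
      - B.bilinAssociator a b (c * d) + B.bilinAssociator a b c * d = 0 := by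
  have hleft : B (a * B b c - B (a * b) c + B a (b * c) - B a b * c) d = 0 := by
    rw [hB, map_zero, LinearMap.zero_apply]
  have hright : B a (b * B c d - B (b * c) d + B b (c * d) - B b c * d) = 0 := by
    rw [hB, map_zero]
  simp only [map_sub, map_add, LinearMap.sub_apply, LinearMap.add_apply] at hleft hright
  simp only [LinearMap.bilinAssociator_apply, mul_sub, sub_mul]
  linear_combination (norm := abel)
    hB a (B b c) d - hB a b (B c d) - hB (B a b) c d + hleft + hright

/-- If every Hochschild 3-cocycle on `A` is a coboundary (i.e. `HH³(A) = 0`), then every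
Hochschild 2-cocycle `B₁` extends to a second-order deformation: there is a bilinear `B₂`
whose Hochschild coboundary equals the obstruction `B₁(B₁(a,b),c) − B₁(a,B₁(b,c))`. -/
theorem exists_second_order_extension_of_threeCocycles_are_coboundaries
    {k A : Type*} [CommRing k] [Ring A] [Algebra k A]
    (h3 : ∀ T : A →ₗ[k] A →ₗ[k] A →ₗ[k] A,
      (∀ a b c d : A,
          a * T b c d - T (a * b) c d + T a (b * c) d - T a b (c * d) + T a b c * d = 0) →
      ∃ S : A →ₗ[k] A →ₗ[k] A, ∀ a b c : A,
        T a b c = a * S b c - S (a * b) c + S a (b * c) - S a b * c)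
    (B₁ : A →ₗ[k] A →ₗ[k] A)
    (hB₁ : ∀ a b c : A, a * B₁ b c - B₁ (a * b) c + B₁ a (b * c) - B₁ a b * c = 0) :
    ∃ B₂ : A →ₗ[k] A →ₗ[k] A, ∀ a b c : A,
      a * B₂ b c - B₂ (a * b) c + B₂ a (b * c) - B₂ a b * c =
        B₁ (B₁ a b) c - B₁ a (B₁ b c) := by
  obtain ⟨S, hS⟩ := h3 B₁.bilinAssociator (B₁.bilinAssociator_threeCocycle hB₁)
  exact ⟨S, fun a b c => (hS a b c).symm⟩
end

section
/- Let k be an algebraically closed field of characteristic 0 and let 𝔤 be a finite-dimensional simple Lie algebra over k. Then every invariant alternating 4-linear form T on 𝔤 (i.e. T alternating with T(⁅w,x₁⁆,x₂,x₃,x₄) + T(x₁,⁅w,x₂⁆,x₃,x₄) + T(x₁,x₂,⁅w,x₃⁆,x₄) + T(x₁,x₂,x₃,⁅w,x₄⁆) = 0 for all w, x₁, x₂, x₃, x₄ ∈ 𝔤) vanishes identically. -/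
/-- An alternating 4-linear form `T` on a Lie algebra is invariant if
`T(⁅w,x₁⁆,x₂,x₃,x₄) + T(x₁,⁅w,x₂⁆,x₃,x₄) + T(x₁,x₂,⁅w,x₃⁆,x₄) + T(x₁,x₂,x₃,⁅w,x₄⁆) = 0`
for all `w, x₁, x₂, x₃, x₄`. -/
def IsInvariantAlt4 {k L : Type*} [Field k] [LieRing L] [LieAlgebra k L]
    (T : L [⋀^Fin 4]→ₗ[k] k) : Prop :=
  ∀ w x₁ x₂ x₃ x₄ : L,
    T ![⁅w, x₁⁆, x₂, x₃, x₄] + T ![x₁, ⁅w, x₂⁆, x₃, x₄] +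
      T ![x₁, x₂, ⁅w, x₃⁆, x₄] + T ![x₁, x₂, x₃, ⁅w, x₄⁆] = 0

open LieAlgebra LieAlgebra.IsKilling LieModule

section MixedForms

variable {k L : Type*} [Field k] [LieRing L] [LieAlgebra k L]

/-- A trilinear form on a Lie algebra is invariant if the Lie algebra acts on it trivially. -/
def IsInvariantTrilinear (ψ : L →ₗ[k] L →ₗ[k] L →ₗ[k] k) : Prop :=
  ∀ w x y z : L, ψ ⁅w, x⁆ y z + ψ x ⁅w, y⁆ z + ψ x y ⁅w, z⁆ = 0

lemma apply_swap_of_apply_self {ψ : L →ₗ[k] L →ₗ[k] L →ₗ[k] k} (halt : ∀ x y, ψ x y y = 0)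
    (x y z : L) : ψ x y z = -ψ x z y := by
  have := halt x (y + z)
  simp only [map_add, LinearMap.add_apply, halt] at this
  linear_combination this

variable [CharZero k] [FiniteDimensional k L] [IsKilling k L]
  {H : LieSubalgebra k L} [H.IsCartanSubalgebra] [IsTriangularizable k H L]
  {ψ : L →ₗ[k] L →ₗ[k] L →ₗ[k] k}

lemma lie_cartan_of_mem_rootSpace {χ : H → k} {e : L} (he : e ∈ rootSpace H χ) (h : H) :
    ⁅e, (h : L)⁆ = -(χ h • e) := by
  rw [← lie_skew, ← lie_eq_smul_of_mem_rootSpace he h]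
  rfl

namespace IsInvariantTrilinear

lemma apply_cartanEquivDual_symm_eq_zero_of_mem_ker (hψ : IsInvariantTrilinear ψ)
    (α : Weight k H L) {h h' : H} (hh : α h = 0) (hh' : α h' = 0) :
    ψ h h' ((cartanEquivDual H).symm α : H) = 0 := by
  have hmem := (mem_corootSpace α).mp (cartanEquivDual_symm_apply_mem_corootSpace α)
  suffices Submodule.span k {⁅y, z⁆ | (y ∈ rootSpace H α) (z ∈ rootSpace H (-α))} ≤
    LinearMap.ker (ψ h h') from this hmem
  rw [Submodule.span_le]
  rintro - ⟨e, he, f, -, rfl⟩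
  simpa [lie_cartan_of_mem_rootSpace he, hh, hh'] using hψ e h h' f

lemma apply_cartanEquivDual_symm_eq_zero (hψ : IsInvariantTrilinear ψ)
    (halt : ∀ x y, ψ x y y = 0) (α : Weight k H L) {h : H} (hh : α h = 0) (h' : H) :
    ψ h h' ((cartanEquivDual H).symm α : H) = 0 := by
  by_cases hα : α.IsZero
  · have : (α.toLinear : H →ₗ[k] k) = 0 := by simpa using hα
    simp [this]
  set t := (cartanEquivDual H).symm α
  have ht : α t ≠ 0 := root_apply_cartanEquivDual_symm_ne_zero hα
  have key := hψ.apply_cartanEquivDual_symm_eq_zero_of_mem_ker α (h' := h' - (α h' / α t) • t) hh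
    (by rw [← Weight.toLinear_apply, map_sub, map_smul]; simp [ht])
  simpa [t, halt] using key

lemma apply_cartan_eq_zero (hψ : IsInvariantTrilinear ψ)
    (halt : ∀ x y, ψ x y y = 0) (h₁ h₂ h₃ : H) : ψ h₁ h₂ h₃ = 0 := by
  have hskew := apply_swap_of_apply_self halt
  have hroots (α β : Weight k H L) (h : H) :
      ψ h ((cartanEquivDual H).symm α : H) ((cartanEquivDual H).symm β : H) = 0 := by
    have hβ (h : H) (hh : β h = 0) := hψ.apply_cartanEquivDual_symm_eq_zero halt β hh
    have hα (h : H) (hh : α h = 0) (h' : H) :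
        ψ h ((cartanEquivDual H).symm α : H) h' = 0 := by
      rw [hskew, hψ.apply_cartanEquivDual_symm_eq_zero halt α hh, neg_zero]
    by_cases hker : ∃ h₀, α h₀ = 0 ∧ β h₀ ≠ 0
    · obtain ⟨h₀, h₁, h₂⟩ := hker
      have := hβ (h - (β h / β h₀) • h₀)
        (by rw [← Weight.toLinear_apply, map_sub, map_smul]; simp [h₂]) ((cartanEquivDual H).symm α)
      simpa [hα h₀ h₁] using this
    · push Not at hker
      obtain ⟨c, hc⟩ : ∃ c : k, c • α.toLinear = β.toLinear := by
        have : β.toLinear ∈ Submodule.span k (Set.range fun _ : Unit ↦ α.toLinear) :=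
          mem_span_of_iInf_ker_le_ker (by simpa [SetLike.le_def] using hker)
        simpa [Submodule.mem_span_singleton] using this
      simp [← hc, halt]
  have hspan : Submodule.span k
      (Set.range fun α : Weight k H L ↦ (cartanEquivDual H).symm α.toLinear) = ⊤ := by
    rw [Set.range_comp' (cartanEquivDual H).symm, ← LinearEquiv.coe_coe, Submodule.span_image,
      span_weight_eq_top, Submodule.map_top, LinearEquiv.range]
  have h₂' : h₂ ∈ Submodule.span k _ := hspan ▸ Submodule.mem_top
  have h₃' : h₃ ∈ Submodule.span k _ := hspan ▸ Submodule.mem_top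
  induction h₂', h₃' using Submodule.span_induction₂ with
  | mem_mem x y hx hy =>
    obtain ⟨α, rfl⟩ := hx
    obtain ⟨β, rfl⟩ := hy
    exact hroots α β h₁
  | _ => clear hskew; simp_all

lemma apply_rootSpace_eq_zero (hψ : IsInvariantTrilinear ψ) (halt : ∀ x y, ψ x y y = 0)
    (hcyc : ∀ x y z, ψ x y z + ψ y z x + ψ z x y = 0) {α β : H → k} {e f : L}
    (he : e ∈ rootSpace H α) (hf : f ∈ rootSpace H β) (h : H) : ψ e f h = 0 := by
  have hskew := apply_swap_of_apply_self halt
  by_cases hαβ : ∃ h₀, α h₀ + β h₀ ≠ 0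
  · obtain ⟨h₀, hh₀⟩ := hαβ
    have := hψ h₀ e f h
    have h0 : ⁅(h₀ : L), (h : L)⁆ = 0 := congrArg Subtype.val (trivial_lie_zero H H h₀ h)
    have he' : ⁅(h₀ : L), e⁆ = α h₀ • e := lie_eq_smul_of_mem_rootSpace he h₀
    have hf' : ⁅(h₀ : L), f⁆ = β h₀ • f := lie_eq_smul_of_mem_rootSpace hf h₀
    simp only [he', hf', h0, map_smul, map_zero, LinearMap.smul_apply, smul_eq_mul] at this
    refine (mul_eq_zero.mp (?_ : (α h₀ + β h₀) * _ = 0)).resolve_left hh₀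
    linear_combination this
  push Not at hαβ
  obtain rfl : β = -α := funext fun h ↦ by simpa using eq_neg_of_add_eq_zero_right (hαβ h)
  have hH (x : L) (hx : x ∈ rootSpace H (0 : H → k)) : x ∈ H := by
    simpa [rootSpace_zero_eq] using hx
  by_cases hα : ∃ h₀, α h₀ ≠ 0
  · obtain ⟨h₀, hh₀⟩ := hα
    have hlie : ⁅e, f⁆ ∈ H :=
      hH _ (by simpa using lie_mem_genWeightSpace_of_mem_genWeightSpace he hf)
    have hlie' : ⁅f, e⁆ ∈ H := by rw [← lie_skew]; exact neg_mem hlie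
    have r₁ (h h' : H) := hψ e h h' f
    have r₃ (h h' : H) := hψ f h h' e
    simp only [lie_cartan_of_mem_rootSpace he, lie_cartan_of_mem_rootSpace hf, map_neg, map_smul,
      LinearMap.neg_apply, LinearMap.smul_apply, smul_eq_mul, Pi.neg_apply,
      hψ.apply_cartan_eq_zero halt _ _ ⟨_, hlie⟩,
      hψ.apply_cartan_eq_zero halt _ _ ⟨_, hlie'⟩] at r₁ r₃
    have hA : α h₀ * (3 * ψ h₀ e f) = 0 := by
      linear_combination α h₀ * hcyc h₀ e f - r₁ h₀ h₀ - r₃ h₀ h₀ - α h₀ * hskew e h₀ f +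
        α h₀ * hskew h₀ f e
    simp only [mul_eq_zero, hh₀, OfNat.ofNat_ne_zero, false_or] at hA
    refine (mul_eq_zero.mp (?_ : α h₀ * _ = 0)).resolve_left hh₀
    linear_combination r₁ h₀ h + α h₀ * hskew e h f + α h * hA
  · push Not at hα
    have he0 : e ∈ H := hH e (by convert he; ext; simp [hα])
    have hf0 : f ∈ H := hH f (by convert hf; ext; simp [hα])
    exact hψ.apply_cartan_eq_zero halt ⟨e, he0⟩ ⟨f, hf0⟩ h

lemma apply_mem_cartan_eq_zero (hψ : IsInvariantTrilinear ψ) (halt : ∀ x y, ψ x y y = 0)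
    (hcyc : ∀ x y z, ψ x y z + ψ y z x + ψ z x y = 0) (x y : L) (h : H) : ψ x y h = 0 := by
  have hx : x ∈ ⨆ χ : Weight k H L, rootSpace H χ :=
    iSup_genWeightSpace_eq_top' k H L ▸ LieSubmodule.mem_top x
  have hy : y ∈ ⨆ χ : Weight k H L, rootSpace H χ :=
    iSup_genWeightSpace_eq_top' k H L ▸ LieSubmodule.mem_top y
  induction hx using LieSubmodule.iSup_induction' with
  | mem α e he =>
    induction hy using LieSubmodule.iSup_induction' with
    | mem β f hf => exact hψ.apply_rootSpace_eq_zero halt hcyc he hf h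
    | zero => simp
    | add y y' _ _ hy hy' => simp [hy, hy']
  | zero => simp
  | add x x' _ _ hx hx' => simp [hx, hx']

/-- On a Lie algebra with non-degenerate Killing form there is no non-zero invariant trilinear form
of mixed symmetry. -/
theorem eq_zero_of_cyclic_sum_eq_zero [IsAlgClosed k] (hψ : IsInvariantTrilinear ψ)
    (halt : ∀ x y, ψ x y y = 0) (hcyc : ∀ x y z, ψ x y z + ψ y z x + ψ z x y = 0)
    (x y z : L) : ψ x y z = 0 := by
  obtain ⟨a, _⟩ := LieAlgebra.exists_isCartanSubalgebra_engel k L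
  let H := LieSubalgebra.engel k a
  have hH := hψ.apply_mem_cartan_eq_zero (H := H) halt hcyc
  have hz : z ∈ ⨆ χ : Weight k H L, rootSpace H χ :=
    iSup_genWeightSpace_eq_top' k H L ▸ LieSubmodule.mem_top z
  induction hz using LieSubmodule.iSup_induction' with
  | mem α e he =>
    by_cases hα : ∃ h₀, α h₀ ≠ 0
    · obtain ⟨h₀, hh₀⟩ := hα
      simpa [lie_cartan_of_mem_rootSpace he, hH, hh₀] using hψ e x y h₀
    · push Not at hα
      have he0 : e ∈ rootSpace H (0 : H → k) := by convert he; ext; simp [hα]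
      rw [rootSpace_zero_eq] at he0
      exact hH x y ⟨e, he0⟩
  | zero => simp
  | add z z' _ _ hz hz' => simp [hz, hz']

/-- On a Lie algebra with non-degenerate Killing form, an invariant trilinear form which is
alternating in two arguments is cyclically symmetric. -/
theorem apply_cyclic [IsAlgClosed k] (hψ : IsInvariantTrilinear ψ) (halt : ∀ x y, ψ x y y = 0)
    (x y z : L) : ψ x y z = ψ y z x := by
  have hskew := apply_swap_of_apply_self halt
  let rot (φ : L →ₗ[k] L →ₗ[k] L →ₗ[k] k) : L →ₗ[k] L →ₗ[k] L →ₗ[k] k :=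
    (LinearMap.lflip.toLinearMap ∘ₗ φ).flip
  let χ : L →ₗ[k] L →ₗ[k] L →ₗ[k] k := (2 : k) • ψ + (-1 : k) • (rot ψ + rot (rot ψ))
  have hχ (x y z) : χ x y z = 2 * ψ x y z - ψ y z x - ψ z x y := by
    simp [χ, rot]
    ring
  have key := eq_zero_of_cyclic_sum_eq_zero (ψ := χ)
    (fun w x y z ↦ by
      simp only [hχ]
      linear_combination 2 * hψ w x y z - hψ w y z x - hψ w z x y)
    (fun x y ↦ by
      simp only [hχ]
      linear_combination 2 * halt x y - hskew y y x)
    (fun x y z ↦ by simp only [hχ]; ring)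
  have h₁ := key x y z
  have h₂ := key y z x
  rw [hχ] at h₁ h₂
  linear_combination (h₁ - h₂) / 3

/-- The contractions of an invariant trilinear form which is alternating in two arguments are
closed. -/
theorem sum_apply_lie_eq_zero [IsAlgClosed k] (hψ : IsInvariantTrilinear ψ)
    (halt : ∀ x y, ψ x y y = 0) (x y z w : L) :
    ψ x ⁅y, z⁆ w + ψ x ⁅z, w⁆ y + ψ x ⁅w, y⁆ z = 0 := by
  have hskew := apply_swap_of_apply_self halt
  have hcyc := hψ.apply_cyclic halt
  have hi (w a b c : L) : ψ ⁅w, a⁆ b c - ψ ⁅w, b⁆ a c + ψ ⁅w, c⁆ a b = 0 := by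
    linear_combination hψ w a b c - hcyc a ⁅w, b⁆ c - hskew ⁅w, b⁆ c a + hcyc ⁅w, c⁆ a b
  have hl (a b c d : L) : ψ ⁅a, b⁆ c d = -ψ ⁅b, a⁆ c d := by
    rw [← lie_skew, map_neg]; rfl
  have hy := hi y x z w
  have hz := hi z x y w
  have hw := hi w x y z
  rw [hl y x] at hy
  rw [hl z x, hl z y] at hz
  rw [hl w x, hl w y, hl w z] at hw
  rw [hcyc x, hcyc x, hcyc x, hskew _ _ x, hskew _ _ x, hskew _ _ x, hl w y]
  linear_combination (hi x y z w + hy - hz + hw) / 2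

end IsInvariantTrilinear

end MixedForms

section Casimir

lemma killingForm_isSymm (k L : Type*) [CommRing k] [LieRing L] [LieAlgebra k L] :
    LinearMap.BilinForm.IsSymm (killingForm k L) :=
  ⟨LieModule.traceForm_comm k L L⟩

variable {k L ι : Type*} [Field k] [LieRing L] [LieAlgebra k L] [IsKilling k L]
  [Fintype ι] [DecidableEq ι] (b : Module.Basis ι k L)

/-- The dual basis with respect to the Killing form. -/
noncomputable abbrev killingDualBasis : Module.Basis ι k L :=
  LinearMap.BilinForm.dualBasis (killingForm k L) (killingForm_nondegenerate k L) b

lemma repr_eq_killingForm (x : L) (i : ι) :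
    b.repr x i = killingForm k L x (killingDualBasis b i) := by
  conv_rhs => rw [← b.sum_repr x]
  simp [LinearMap.BilinForm.apply_dualBasis_right _ (killingForm_isSymm k L),
    -Module.Basis.sum_repr]

lemma sum_lie_killingDualBasis (B : L →ₗ[k] L →ₗ[k] k) (w : L) :
    ∑ i, (B ⁅w, killingDualBasis b i⁆ (b i) + B (killingDualBasis b i) ⁅w, b i⁆) = 0 := by
  have h₁ (i : ι) : B ⁅w, killingDualBasis b i⁆ (b i) =
      ∑ j, killingForm k L ⁅w, killingDualBasis b i⁆ (b j) * B (killingDualBasis b j) (b i) := by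
    conv_lhs => rw [← (killingDualBasis b).sum_repr ⁅w, killingDualBasis b i⁆]
    simp [-Module.Basis.sum_repr, LinearMap.BilinForm.dualBasis_repr_apply]
  have h₂ (i : ι) : B (killingDualBasis b i) ⁅w, b i⁆ =
      ∑ j, killingForm k L ⁅w, b i⁆ (killingDualBasis b j) * B (killingDualBasis b i) (b j) := by
    conv_lhs => rw [← b.sum_repr ⁅w, b i⁆]
    simp [-Module.Basis.sum_repr, repr_eq_killingForm]
  rw [Finset.sum_add_distrib]
  simp_rw [h₁, h₂]
  rw [Finset.sum_comm, ← Finset.sum_add_distrib]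
  refine Finset.sum_eq_zero fun i _ ↦ ?_
  rw [← Finset.sum_add_distrib]
  refine Finset.sum_eq_zero fun j _ ↦ ?_
  rw [LieModule.traceForm_apply_lie_apply', LieModule.traceForm_comm k L L _ ⁅w, b i⁆]
  ring

/-- The Casimir element of the Killing form acts as the identity on the adjoint representation. -/
lemma sum_lie_lie_killingDualBasis (x : L) : ∑ i, ⁅b i, ⁅killingDualBasis b i, x⁆⁆ = x := by
  refine LinearMap.ker_eq_bot.mp (ker_killingForm_eq_bot k L) (LinearMap.ext fun y ↦ ?_)
  have : killingForm k L x y = ∑ i, b.repr ⁅x, ⁅y, b i⁆⁆ i := by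
    rw [killingForm_apply_apply, LinearMap.trace_eq_matrix_trace k b]
    simp [Matrix.trace, LinearMap.toMatrix_apply]
  simp_rw [this, repr_eq_killingForm, map_sum, LinearMap.sum_apply]
  refine Finset.sum_congr rfl fun i _ ↦ ?_
  rw [LieModule.traceForm_apply_lie_apply' k L L x, ← lie_skew x (killingDualBasis b i),
    LieModule.traceForm_comm k L L _ y, ← LieModule.traceForm_apply_lie_apply, map_neg, neg_neg]

end Casimir

section Contraction

variable {k L : Type*} [Field k] [LieRing L] [LieAlgebra k L]

/-- An alternating 4-linear form as an iterated linear map. -/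
noncomputable def AlternatingMap.curryFour (T : L [⋀^Fin 4]→ₗ[k] k) :
    L →ₗ[k] L →ₗ[k] L →ₗ[k] L →ₗ[k] k :=
  let c₀ : (L [⋀^Fin 0]→ₗ[k] k) →ₗ[k] k :=
    AlternatingMap.constLinearEquivOfIsEmpty.symm.toLinearMap
  let c₁ := c₀.compRight k ∘ₗ AlternatingMap.curryLeftLinearMap (R := k) (M := L) (N := k)
  let c₂ := c₁.compRight k ∘ₗ AlternatingMap.curryLeftLinearMap
  let c₃ := c₂.compRight k ∘ₗ AlternatingMap.curryLeftLinearMap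
  c₃ ∘ₗ T.curryLeft

lemma AlternatingMap.curryFour_apply (T : L [⋀^Fin 4]→ₗ[k] k) (x y z w : L) :
    T.curryFour x y z w = T ![x, y, z, w] := by
  change T (Matrix.vecCons x (Matrix.vecCons y (Matrix.vecCons z (Matrix.vecCons w 0)))) = _
  rw [Subsingleton.elim (0 : Fin 0 → L) ![]]

lemma AlternatingMap.curryFour_swap₁₂ (T : L [⋀^Fin 4]→ₗ[k] k) (x y z w : L) :
    T.curryFour x y z w = -T.curryFour y x z w := by
  simp only [curryFour_apply]
  rw [← T.map_swap ![y, x, z, w] (i := 0) (j := 1) (by decide)]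
  congr 1
  ext i
  fin_cases i <;> rfl

lemma AlternatingMap.curryFour_swap₂₃ (T : L [⋀^Fin 4]→ₗ[k] k) (x y z w : L) :
    T.curryFour x y z w = -T.curryFour x z y w := by
  simp only [curryFour_apply]
  rw [← T.map_swap ![x, z, y, w] (i := 1) (j := 2) (by decide)]
  congr 1
  ext i
  fin_cases i <;> rfl

lemma AlternatingMap.curryFour_swap₃₄ (T : L [⋀^Fin 4]→ₗ[k] k) (x y z w : L) :
    T.curryFour x y z w = -T.curryFour x y w z := by
  simp only [curryFour_apply]
  rw [← T.map_swap ![x, y, w, z] (i := 2) (j := 3) (by decide)]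
  congr 1
  ext i
  fin_cases i <;> rfl

variable {T : L [⋀^Fin 4]→ₗ[k] k}

lemma IsInvariantAlt4.curryFour (hT : IsInvariantAlt4 T) (w x₁ x₂ x₃ x₄ : L) :
    T.curryFour ⁅w, x₁⁆ x₂ x₃ x₄ + T.curryFour x₁ ⁅w, x₂⁆ x₃ x₄ +
      T.curryFour x₁ x₂ ⁅w, x₃⁆ x₄ + T.curryFour x₁ x₂ x₃ ⁅w, x₄⁆ = 0 := by
  simpa only [AlternatingMap.curryFour_apply] using hT w x₁ x₂ x₃ x₄

/-- An invariant alternating form is a cocycle, so that its contractions are closed. -/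
lemma IsInvariantAlt4.apply_lie_eq [CharZero k] (hT : IsInvariantAlt4 T) (u v x y z : L) :
    T.curryFour ⁅u, v⁆ x y z =
      -(T.curryFour v u ⁅x, y⁆ z + T.curryFour v u ⁅y, z⁆ x + T.curryFour v u ⁅z, x⁆ y) := by
  have s₂ (a b c d) : T.curryFour a b c d = -T.curryFour b a c d := T.curryFour_swap₁₂ a b c d
  have s₃ (a b c d) : T.curryFour a b c d = T.curryFour c a b d := by
    rw [T.curryFour_swap₂₃, T.curryFour_swap₁₂, neg_neg]
  have s₄ (a b c d) : T.curryFour a b c d = -T.curryFour d a b c := by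
    rw [T.curryFour_swap₃₄, s₃]
  have hi (w a b c d : L) : T.curryFour ⁅w, a⁆ b c d - T.curryFour ⁅w, b⁆ a c d +
      T.curryFour ⁅w, c⁆ a b d - T.curryFour ⁅w, d⁆ a b c = 0 := by
    have := hT.curryFour w a b c d
    rw [s₂ a, s₃ a, s₄ a] at this
    linear_combination this
  have hl (a b c d e : L) : T.curryFour ⁅a, b⁆ c d e = -T.curryFour ⁅b, a⁆ c d e := by
    rw [← lie_skew, ← neg_one_smul k, map_smul]
    simp
  have hu := hi u v x y z
  have hv := hi v u x y z
  have hx := hi x u v y z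
  have hy := hi y u v x z
  have hz := hi z u v x y
  rw [hl v u] at hv
  rw [hl x u, hl x v] at hx
  rw [hl y u, hl y v, hl y x] at hy
  rw [hl z u, hl z v, hl z x, hl z y] at hz
  rw [s₃ v u ⁅x, y⁆, s₃ v u ⁅y, z⁆, s₃ v u ⁅z, x⁆, T.curryFour_swap₂₃ _ v u,
    T.curryFour_swap₂₃ _ v u, T.curryFour_swap₂₃ _ v u, hl z x]
  linear_combination (hu - hv - hx + hy - hz) / 2

end Contraction

/-- Over an algebraically closed field of characteristic zero, every invariant alternating
4-linear form on a finite-dimensional simple Lie algebra vanishes identically. -/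
theorem invariant_alternating_four_form_eq_zero
    (k : Type*) [Field k] [IsAlgClosed k] [CharZero k]
    (L : Type*) [LieRing L] [LieAlgebra k L] [Module.Finite k L]
    [LieAlgebra.IsSimple k L]
    (T : L [⋀^Fin 4]→ₗ[k] k) (hT : IsInvariantAlt4 T) :
    T = 0 := by
  classical
  let b := Module.finBasis k L
  let ψ : L →ₗ[k] L →ₗ[k] L →ₗ[k] k :=
    ∑ i, T.curryFour.flip (b i) ∘ₗ (ad k L (killingDualBasis b i) : L →ₗ[k] L)
  have hψ_apply (x y z : L) :
      ψ x y z = ∑ i, T.curryFour ⁅killingDualBasis b i, x⁆ (b i) y z := by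
    simp [ψ, LinearMap.sum_apply]
  have halt (x y : L) : ψ x y y = 0 := by
    rw [hψ_apply]
    exact Finset.sum_eq_zero fun i _ ↦ self_eq_neg.mp (T.curryFour_swap₃₄ _ _ _ _)
  have hψ : IsInvariantTrilinear ψ := by
    intro w x y z
    let B : L →ₗ[k] L →ₗ[k] k :=
      LinearMap.mk₂ k (fun u v ↦ T.curryFour ⁅u, x⁆ v y z) (by simp) (by simp) (by simp) (by simp)
    rw [← neg_eq_zero, ← sum_lie_killingDualBasis b B w, ← sub_eq_zero, hψ_apply, hψ_apply,
      hψ_apply]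
    simp only [← Finset.sum_add_distrib, ← Finset.sum_neg_distrib, ← Finset.sum_sub_distrib]
    refine Finset.sum_eq_zero fun i _ ↦ ?_
    have := hT.curryFour w ⁅killingDualBasis b i, x⁆ (b i) y z
    rw [leibniz_lie w, map_add] at this
    simp only [LinearMap.add_apply] at this
    simp only [B, LinearMap.mk₂_apply]
    linear_combination -this
  have hzero (x y z w : L) : T.curryFour x y z w = 0 := by
    conv_lhs => rw [← sum_lie_lie_killingDualBasis b x]
    simp only [map_sum, LinearMap.sum_apply]
    rw [Finset.sum_congr rfl fun i _ ↦ hT.apply_lie_eq (b i) ⁅killingDualBasis b i, x⁆ y z w,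
      Finset.sum_neg_distrib, Finset.sum_add_distrib, Finset.sum_add_distrib, ← hψ_apply,
      ← hψ_apply, ← hψ_apply, hψ.sum_apply_lie_eq_zero halt, neg_zero]
  ext v
  have hv : v = ![v 0, v 1, v 2, v 3] := by
    ext i
    fin_cases i <;> rfl
  rw [hv, ← AlternatingMap.curryFour_apply, hzero, AlternatingMap.zero_apply]
end
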